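/- Let x be a positive rational with continued fraction expansion x = [a_0, a_1, …, a_m] (a_0 ≥ 0, a_j ≥ 1 for j ≥ 1, a_m ≥ 2 when m ≥ 1). Then the limit distribution function of the Calkin–Wilf tree satisfies F(x) = 1 − 2^(−a_0) + 2^(−(a_0+a_1)) − 2^(−(a_0+a_1+a_2)) + ⋯, i.e. F(x) = 1 + Σ_{k=0}^{m} (−1)^{k+1} · 2^(−(a_0 + a_1 + ⋯ + a_k)). -/

import Mathlib

open Filter

/-- The generations of the Calkin–Wilf tree: `CW 0 = [1/1]` is the first
generation, and each generation is obtained from the previous one by replacing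
each entry `x` by `x/(x+1)` and `x+1`, in this order.  Thus the `n`-th
generation of the paper is `CW (n-1)`. -/
def CW : ℕ → List ℚ
  | 0 => [1]
  | n + 1 => (CW n).flatMap (fun x => [x / (x + 1), x + 1])

open scoped Classical in
/-- `Fcw n` is the distribution function of the `(n+1)`-st generation of the
Calkin–Wilf tree: `Fcw (n-1) x = F_n(x) = 2^(1-n) · #{j : x_j^(n) ≤ x}`. -/
noncomputable def Fcw (n : ℕ) (x : ℝ) : ℝ :=
  ((CW n).countP (fun q => decide ((q : ℝ) ≤ x))) / 2 ^ n

/-- The value of the finite continued fraction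
`[a₀, a₁, …, a_m] = a₀ + 1/(a₁ + 1/(⋯ + 1/a_m))`, given as the list
`[a₀, a₁, …, a_m]` of its partial quotients. -/
def cfVal : List ℕ → ℚ
  | [] => 0
  | [a] => (a : ℚ)
  | a :: l => (a : ℚ) + (cfVal l)⁻¹

theorem bind_pure_cast (L : List ℚ) :
    (do let a ← L; pure (a : ℝ) : List ℝ) = L.map (fun q : ℚ => (q : ℝ)) := by
  simp [List.map_eq_flatMap, List.bind_eq_flatMap, List.pure_def]

theorem Fcw_eq (n : ℕ) (x : ℝ) :
    Fcw n x = ((CW n).countP (fun q : ℚ => decide ((q : ℝ) ≤ x)) : ℕ) / 2 ^ n := by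
  unfold Fcw
  rw [bind_pure_cast, List.countP_map]
  rfl

theorem CW_pos (n : ℕ) : ∀ q ∈ CW n, 0 < q := by
  induction n with
  | zero => simp [CW]
  | succ n ih =>
    intro q hq
    simp only [CW, List.mem_flatMap] at hq
    obtain ⟨y, hy, hq⟩ := hq
    have := ih y hy
    simp only [List.mem_cons, List.not_mem_nil, or_false] at hq
    rcases hq with rfl | rfl <;> positivity

theorem CW_length (n : ℕ) : (CW n).length = 2 ^ n := by
  induction n with
  | zero => simp [CW]
  | succ n ih => simp [CW, List.length_flatMap, ih, pow_succ]

theorem countP_split (p : ℚ → Bool) (L : List ℚ) :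
    (L.flatMap (fun x => [x / (x + 1), x + 1])).countP p
      = L.countP (fun q => p (q / (q + 1))) + L.countP (fun q => p (q + 1)) := by
  induction L with
  | nil => simp
  | cons a L ih =>
    simp only [List.flatMap_cons, List.countP_append, ih, List.countP_cons, List.countP_nil]
    omega

theorem Fcw_zero (n : ℕ) : Fcw n 0 = 0 := by
  simp only [Fcw_eq]
  have : (CW n).countP (fun q : ℚ => decide ((q : ℝ) ≤ 0)) = 0 := by
    rw [List.countP_eq_zero]
    intro q hq
    have := CW_pos n q hq
    simpa using this
  rw [this]
  simp

theorem Fcw_ge (n : ℕ) (x : ℝ) (hx : 0 ≤ x) : Fcw (n + 1) (x + 1) = 1 / 2 + Fcw n x / 2 := by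
  simp only [Fcw_eq]
  rw [CW, countP_split]
  have h1 : (CW n).countP (fun q : ℚ => decide (((q / (q + 1) : ℚ) : ℝ) ≤ x + 1)) = 2 ^ n := by
    rw [← CW_length, List.countP_eq_length]
    intro q hq
    have hq : (0 : ℝ) < q := by exact_mod_cast CW_pos n q hq
    simp only [decide_eq_true_eq]
    push_cast
    rw [div_le_iff₀ (by positivity)]
    nlinarith
  have h2 : (CW n).countP (fun q : ℚ => decide (((q + 1 : ℚ) : ℝ) ≤ x + 1))
      = (CW n).countP (fun q : ℚ => decide ((q : ℝ) ≤ x)) := by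
    simp
  rw [h1, h2]
  push_cast
  rw [pow_succ]
  field_simp

theorem Fcw_lt (n : ℕ) (x : ℝ) (hx : 0 ≤ x) (hx1 : x < 1) :
    Fcw (n + 1) x = Fcw n (x / (1 - x)) / 2 := by
  simp only [Fcw_eq]
  rw [CW, countP_split]
  have h1 : (CW n).countP (fun q : ℚ => decide (((q / (q + 1) : ℚ) : ℝ) ≤ x))
      = (CW n).countP (fun q : ℚ => decide ((q : ℝ) ≤ x / (1 - x))) := by
    apply List.countP_congr
    intro q hq
    have hq : (0 : ℝ) < q := by exact_mod_cast CW_pos n q hq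
    simp only [decide_eq_true_eq]
    push_cast
    rw [div_le_iff₀ (by positivity), le_div_iff₀ (by linarith)]
    constructor <;> intro h <;> linarith
  have h2 : (CW n).countP (fun q : ℚ => decide (((q + 1 : ℚ) : ℝ) ≤ x)) = 0 := by
    rw [List.countP_eq_zero]
    intro q hq
    have hq : (0 : ℝ) < q := by exact_mod_cast CW_pos n q hq
    simp only [decide_eq_true_eq]
    push_cast
    linarith
  rw [h1, h2]
  push_cast
  rw [pow_succ, add_zero, div_mul_eq_div_div]

noncomputable def Gcf (A : List ℕ) : ℝ :=
  1 + ∑ k ∈ Finset.range A.length,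
      (-1 : ℝ) ^ (k + 1) * 2 ^ (-(((A.take (k + 1)).sum : ℤ)))

theorem Gcf_cons (a : ℕ) (l : List ℕ) : Gcf (a :: l) = 1 - 2 ^ (-(a : ℤ)) * Gcf l := by
  unfold Gcf
  rw [List.length_cons, Finset.sum_range_succ', mul_add, Finset.mul_sum]
  have : ∀ k, (-1 : ℝ) ^ (k + 1 + 1) * 2 ^ (-((((a :: l).take (k + 1 + 1)).sum : ℤ)))
      = - (2 ^ (-(a : ℤ)) * ((-1 : ℝ) ^ (k + 1) * 2 ^ (-(((l.take (k + 1)).sum : ℤ))))) := by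
    intro k
    rw [List.take_succ_cons, List.sum_cons]
    push_cast
    rw [neg_add, zpow_add₀ (by norm_num), pow_succ (-1 : ℝ) (k + 1)]
    ring
  simp only [this, Finset.sum_neg_distrib]
  simp
  ring

theorem F_zero (F : ℝ → ℝ)
    (hF : ∀ x : ℝ, 0 ≤ x → Tendsto (fun n => Fcw n x) atTop (nhds (F x))) : F 0 = 0 := by
  have h := hF 0 le_rfl
  simp only [Fcw_zero] at h
  exact (tendsto_nhds_unique h tendsto_const_nhds)

theorem F_ge (F : ℝ → ℝ)
    (hF : ∀ x : ℝ, 0 ≤ x → Tendsto (fun n => Fcw n x) atTop (nhds (F x)))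
    (x : ℝ) (hx : 0 ≤ x) : F (x + 1) = 1 / 2 + F x / 2 := by
  have h := (tendsto_add_atTop_iff_nat 1).2 (hF (x + 1) (by linarith))
  simp only [Fcw_ge _ x hx] at h
  exact tendsto_nhds_unique h (((hF x hx).div_const 2).const_add _)

theorem F_lt (F : ℝ → ℝ)
    (hF : ∀ x : ℝ, 0 ≤ x → Tendsto (fun n => Fcw n x) atTop (nhds (F x)))
    (x : ℝ) (hx : 0 ≤ x) (hx1 : x < 1) : F x = F (x / (1 - x)) / 2 := by
  have h := (tendsto_add_atTop_iff_nat 1).2 (hF x hx)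
  simp only [Fcw_lt _ x hx hx1] at h
  exact tendsto_nhds_unique h ((hF _ (div_nonneg hx (by linarith))).div_const 2)

theorem F_add_nat (F : ℝ → ℝ)
    (hF : ∀ x : ℝ, 0 ≤ x → Tendsto (fun n => Fcw n x) atTop (nhds (F x)))
    (x : ℝ) (hx : 0 ≤ x) (a : ℕ) : F (a + x) = 1 - 2 ^ (-(a : ℤ)) * (1 - F x) := by
  induction a with
  | zero => simp
  | succ a ih =>
    have : ((a + 1 : ℕ) : ℝ) + x = (a + x) + 1 := by push_cast; ring
    rw [this, F_ge F hF _ (by positivity), ih]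
    push_cast
    rw [neg_add, zpow_add₀ (by norm_num)]
    norm_num
    ring

theorem F_symm_add (F : ℝ → ℝ)
    (hF : ∀ x : ℝ, 0 ≤ x → Tendsto (fun n => Fcw n x) atTop (nhds (F x)))
    (x : ℝ) (hx : 0 < x) (h : F x⁻¹ = 1 - F x) (a : ℕ) : F (a + x)⁻¹ = 1 - F (a + x) := by
  induction a with
  | zero => simpa using h
  | succ a ih =>
    have : ((a + 1 : ℕ) : ℝ) + x = (a + x) + 1 := by push_cast; ring
    rw [this]
    have hy : (0 : ℝ) < a + x := by positivity
    generalize (a : ℝ) + x = y at *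
    rw [F_ge F hF _ hy.le, F_lt F hF _ (by positivity) (inv_lt_one_of_one_lt₀ (by linarith))]
    have e : (y + 1)⁻¹ / (1 - (y + 1)⁻¹) = y⁻¹ := by
      have : y + 1 ≠ 0 := by positivity
      have e1 : 1 - (y + 1)⁻¹ = y / (y + 1) := by field_simp; ring
      rw [e1]; field_simp
    rw [e, ih]
    ring

theorem F_cf (F : ℝ → ℝ)
    (hF : ∀ x : ℝ, 0 ≤ x → Tendsto (fun n => Fcw n x) atTop (nhds (F x)))
    (l : List ℕ) (hl : l ≠ []) (hpos : ∀ a ∈ l, 1 ≤ a) :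
    0 < cfVal l ∧ F (cfVal l : ℝ) = Gcf l ∧ F (cfVal l : ℝ)⁻¹ = 1 - F (cfVal l : ℝ) := by
  induction l with
  | nil => exact absurd rfl hl
  | cons a l ih =>
    have ha : 1 ≤ a := hpos a (by simp)
    cases l with
    | nil =>
      refine ⟨by simp only [cfVal]; exact_mod_cast ha, ?_, ?_⟩
      · have := F_add_nat F hF 0 le_rfl a
        rw [F_zero F hF] at this
        rw [Gcf_cons]
        simpa [cfVal, Gcf] using this
      · obtain ⟨b, rfl⟩ := Nat.exists_eq_add_of_le' ha
        have h1 : F 1 = 1 / 2 := by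
          have := F_ge F hF 0 le_rfl
          rw [F_zero F hF] at this
          simpa using this
        have := F_symm_add F hF 1 one_pos (by rw [inv_one, h1]; norm_num) b
        simpa [cfVal] using this
    | cons b l =>
      obtain ⟨h0, h1, h2⟩ := ih (by simp) (fun c hc => hpos c (by simp [hc]))
      have h0' : (0 : ℝ) < (cfVal (b :: l) : ℝ) := by exact_mod_cast h0
      have e : cfVal (a :: b :: l) = (a : ℚ) + (cfVal (b :: l))⁻¹ := by simp [cfVal]
      rw [e]
      push_cast
      refine ⟨by positivity, ?_, ?_⟩
      · rw [F_add_nat F hF _ (by positivity), h2, Gcf_cons, ← h1]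
        ring
      · apply F_symm_add F hF _ (by positivity)
        rw [inv_inv, h2]; ring

/-- For a positive rational `x` with continued fraction expansion
`x = [a₀, a₁, …, a_m]` (`a₀ ≥ 0`, `a_j ≥ 1` for `j ≥ 1`, `a_m ≥ 2` when
`m ≥ 1`), the limit distribution function `F` of the Calkin–Wilf tree satisfies
`F(x) = 1 − 2^(−a₀) + 2^(−(a₀+a₁)) − 2^(−(a₀+a₁+a₂)) + ⋯`, i.e.
`F(x) = 1 + ∑_{k=0}^{m} (−1)^(k+1) · 2^(−(a₀+⋯+a_k))`. -/
theorem calkin_wilf_limit_distribution_at_rationals (F : ℝ → ℝ)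
    (hF : ∀ x : ℝ, 0 ≤ x → Tendsto (fun n => Fcw n x) atTop (nhds (F x)))
    (A : List ℕ) (hA : A ≠ []) (hAtail : ∀ a ∈ A.tail, 1 ≤ a)
    (hAlast : 2 ≤ A.length → 2 ≤ A.getLast hA)
    (x : ℚ) (hx : 0 < x) (hxA : x = cfVal A) :
    F (x : ℝ) = 1 + ∑ k ∈ Finset.range A.length,
      (-1 : ℝ) ^ (k + 1) * 2 ^ (-(((A.take (k + 1)).sum : ℤ))) := by
  change F (x : ℝ) = Gcf A
  subst hxA
  cases A with
  | nil => exact absurd rfl hA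
  | cons a l =>
    cases l with
    | nil =>
      have := F_add_nat F hF 0 le_rfl a
      rw [F_zero F hF] at this
      rw [Gcf_cons]
      simpa [cfVal, Gcf] using this
    | cons b l =>
      obtain ⟨h0, h1, h2⟩ := F_cf F hF (b :: l) (by simp) hAtail
      have h0' : (0 : ℝ) < (cfVal (b :: l) : ℝ) := by exact_mod_cast h0
      have e : cfVal (a :: b :: l) = (a : ℚ) + (cfVal (b :: l))⁻¹ := by simp [cfVal]
      rw [e]
      push_cast
      rw [F_add_nat F hF _ (by positivity), h2, Gcf_cons, ← h1]
      ring
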